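/- arXiv:2403.19494 — 4 statements merged into one kernel-verified Lean document; each statement's English description precedes it below -/
import Mathlib

section
/- (Corollary 4.4: excess error bound for the full two-stage method.) Assume there exist α ∈ (0,1] and β > 0 such that for every probability measure ν on X×{0,...,n_e} and every measurable r : X → ℝ^{n_e+1}, E_{ℓ01}(r) − E*_{ℓ01} ≤ β·(E_ℓ(r) − E*_ℓ)^α. Then for every probability measure μ on X×ℝ, every measurable predictor h : X → ℝ and every measurable deferral function r : X → ℝ^{n_e+1}, E_{L_def}(h,r) − E*_{L_def} ≤ (E_L(h) − inf_{h' measurable} E_L(h')) + (n_e·(l̄ + Σ_{j=1}^{n_e} C_j))^{1−α}·β·(E_{L^h_ℓ}(r) − inf_{r' measurable} E_{L^h_ℓ}(r'))^α, where E_L(h) = ∫ L(h(x),y) dμ(x,y). -/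
open MeasureTheory Finset ENNReal

variable {X : Type*}

/-- The deferral loss `L_def(h,r,x,y)`. -/
noncomputable def defLoss (nE : ℕ) (L : ℝ → ℝ → ℝ) (c : Fin nE → X × ℝ → ℝ)
    (sel : (Fin (nE + 1) → ℝ) → Fin (nE + 1))
    (h : X → ℝ) (r : X → Fin (nE + 1) → ℝ) (z : X × ℝ) : ℝ :=
  (if sel (r z.1) = 0 then L (h z.1) z.2 else 0)
    + ∑ j : Fin nE, if sel (r z.1) = j.succ then c j z else 0

/-- The single-stage surrogate loss `L_ℓ(h,r,x,y)`. -/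
noncomputable def surLoss (nE : ℕ) (L : ℝ → ℝ → ℝ) (c : Fin nE → X × ℝ → ℝ)
    (ℓ : (Fin (nE + 1) → ℝ) → Fin (nE + 1) → ℝ)
    (h : X → ℝ) (r : X → Fin (nE + 1) → ℝ) (z : X × ℝ) : ℝ :=
  (∑ j, c j z) * ℓ (r z.1) 0
    + ∑ j : Fin nE, (L (h z.1) z.2 + ∑ j' ∈ univ.erase j, c j' z) * ℓ (r z.1) j.succ
    - ((nE : ℝ) - 1) * L (h z.1) z.2

/-- The two-stage surrogate loss `L^h_ℓ(r,x,y)` (no `−(n_e−1)L` term). -/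
noncomputable def surLossTS (nE : ℕ) (L : ℝ → ℝ → ℝ) (c : Fin nE → X × ℝ → ℝ)
    (ℓ : (Fin (nE + 1) → ℝ) → Fin (nE + 1) → ℝ)
    (h : X → ℝ) (r : X → Fin (nE + 1) → ℝ) (z : X × ℝ) : ℝ :=
  (∑ j, c j z) * ℓ (r z.1) 0
    + ∑ j : Fin nE, (L (h z.1) z.2 + ∑ j' ∈ univ.erase j, c j' z) * ℓ (r z.1) j.succ

/-- Generalization error of a nonnegative loss, as a Lebesgue integral in `[0,∞]`. -/
noncomputable def genErr {W : Type*} [MeasurableSpace W] (μ : Measure W) (f : W → ℝ) : ℝ≥0∞ :=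
  ∫⁻ w, ENNReal.ofReal (f w) ∂μ

variable [MeasurableSpace X]

/-- Multi-class zero-one generalization error `E_{ℓ01}(r)`. -/
noncomputable def E01 (nE : ℕ) (sel : (Fin (nE + 1) → ℝ) → Fin (nE + 1))
    (ν : Measure (X × Fin (nE + 1))) (r : X → Fin (nE + 1) → ℝ) : ℝ≥0∞ :=
  ν {z | sel (r z.1) ≠ z.2}

/-- Multi-class surrogate generalization error `E_ℓ(r)`. -/
noncomputable def Eell (nE : ℕ) (ℓ : (Fin (nE + 1) → ℝ) → Fin (nE + 1) → ℝ)
    (ν : Measure (X × Fin (nE + 1))) (r : X → Fin (nE + 1) → ℝ) : ℝ≥0∞ :=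
  ∫⁻ z, ENNReal.ofReal (ℓ (r z.1) z.2) ∂ν

/-- real weights -/
noncomputable def wgt (nE : ℕ) (L : ℝ → ℝ → ℝ) (c : Fin nE → X × ℝ → ℝ)
    (h : X → ℝ) (j : Fin (nE + 1)) (z : X × ℝ) : ℝ :=
  Fin.cases (∑ j, c j z) (fun j => L (h z.1) z.2 + ∑ j' ∈ univ.erase j, c j' z) j

theorem exists_mix {X : Type*} [MeasurableSpace X] (n : ℕ) (μ : Measure (X × ℝ))
    (w : Fin n → X × ℝ → ℝ≥0∞) (hw : ∀ j, Measurable (w j)) :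
    ∃ ν : Measure (X × Fin n), ∀ f : X × Fin n → ℝ≥0∞, Measurable f →
      ∫⁻ p, f p ∂ν = ∫⁻ z, ∑ j, w j z * f (z.1, j) ∂μ := by
  refine ⟨∑ j, Measure.map (fun z : X × ℝ => (z.1, j)) (μ.withDensity (w j)), ?_⟩
  intro f hf
  have hm : ∀ j : Fin n, Measurable (fun z : X × ℝ => (z.1, j)) := fun j => by fun_prop
  rw [lintegral_finsetSum_measure, lintegral_finsetSum]
  · refine Finset.sum_congr rfl fun j _ => ?_
    rw [lintegral_map hf (hm j)]
    exact lintegral_withDensity_eq_lintegral_mul _ (hw j) (hf.comp (hm j))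
  · intro j _
    exact (hw j).mul (hf.comp (hm j))

theorem wgt_sum (nE : ℕ) (L : ℝ → ℝ → ℝ) (c : Fin nE → X × ℝ → ℝ) (h : X → ℝ) (z : X × ℝ) :
    ∑ j, wgt nE L c h j z = nE * (L (h z.1) z.2 + ∑ j, c j z) := by
  rw [Fin.sum_univ_succ]
  simp only [wgt, Fin.cases_zero, Fin.cases_succ]
  have : ∀ j : Fin nE, ∑ j' ∈ univ.erase j, c j' z = ∑ j', c j' z - c j z := fun j => by
    rw [← Finset.sum_erase_add univ _ (Finset.mem_univ j)]; ring
  simp only [this, Finset.sum_add_distrib, Finset.sum_sub_distrib, Finset.sum_const,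
    Finset.card_univ, Fintype.card_fin, nsmul_eq_mul]
  ring

theorem wgt_err (nE : ℕ) (L : ℝ → ℝ → ℝ) (c : Fin nE → X × ℝ → ℝ) (h : X → ℝ)
    (sel : (Fin (nE + 1) → ℝ) → Fin (nE + 1)) (r : X → Fin (nE + 1) → ℝ) (z : X × ℝ) :
    ∑ j, wgt nE L c h j z * (if sel (r z.1) ≠ j then 1 else 0)
      = defLoss nE L c sel h r z + (nE - 1) * (L (h z.1) z.2 + ∑ j, c j z) := by
  have h1 : ∑ j, wgt nE L c h j z * (if sel (r z.1) ≠ j then 1 else 0)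
      = ∑ j, wgt nE L c h j z - wgt nE L c h (sel (r z.1)) z := by
    have : ∀ j, wgt nE L c h j z * (if sel (r z.1) ≠ j then (1:ℝ) else 0)
      = wgt nE L c h j z - (if sel (r z.1) = j then wgt nE L c h j z else 0) := by
      intro j; by_cases hj : sel (r z.1) = j <;> simp [hj]
    simp only [this, Finset.sum_sub_distrib, Finset.sum_ite_eq, Finset.mem_univ, if_true]
  rw [h1, wgt_sum]
  unfold defLoss
  generalize sel (r z.1) = k
  refine Fin.cases ?_ (fun k => ?_) k
  · simp [wgt, (Fin.succ_ne_zero _).symm]; ring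
  · have : ∑ j' ∈ univ.erase k, c j' z = ∑ j', c j' z - c k z := by
      rw [← Finset.sum_erase_add univ _ (Finset.mem_univ k)]; ring
    simp [wgt, this]; ring

theorem surLossTS_eq (nE : ℕ) (L : ℝ → ℝ → ℝ) (c : Fin nE → X × ℝ → ℝ) (h : X → ℝ)
    (ℓ : (Fin (nE + 1) → ℝ) → Fin (nE + 1) → ℝ) (r : X → Fin (nE + 1) → ℝ) (z : X × ℝ) :
    ∑ j, wgt nE L c h j z * ℓ (r z.1) j = surLossTS nE L c ℓ h r z := by
  rw [Fin.sum_univ_succ]; rfl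

/-- Corollary 4.4: excess error bound for the full two-stage method. -/
theorem two_stage_full_excess_error_bound {X : Type*} [MeasurableSpace X]
    (nE : ℕ) (hnE : 1 ≤ nE)
    (lbar : ℝ) (hlbar : 0 < lbar)
    (C : Fin nE → ℝ) (hC : ∀ j, 0 < C j)
    (L : ℝ → ℝ → ℝ) (hLmeas : Measurable fun p : ℝ × ℝ => L p.1 p.2)
    (hL : ∀ y' y, L y' y ∈ Set.Icc 0 lbar)
    (c : Fin nE → X × ℝ → ℝ) (hcmeas : ∀ j, Measurable (c j))
    (hc : ∀ j z, c j z ∈ Set.Ioc 0 (C j))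
    (sel : (Fin (nE + 1) → ℝ) → Fin (nE + 1)) (hselmeas : Measurable sel)
    (hsel : ∀ (s : Fin (nE + 1) → ℝ) (j : Fin (nE + 1)), s j ≤ s (sel s))
    (ℓ : (Fin (nE + 1) → ℝ) → Fin (nE + 1) → ℝ)
    (hℓmeas : Measurable fun p : (Fin (nE + 1) → ℝ) × Fin (nE + 1) => ℓ p.1 p.2)
    (hℓ0 : ∀ s j, 0 ≤ ℓ s j)
    (hℓ1 : ∀ s j, j ≠ sel s → 1 ≤ ℓ s j)
    (α β : ℝ) (hα : α ∈ Set.Ioc (0 : ℝ) 1) (hβ : 0 < β)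
    (hcons : ∀ ν : Measure (X × Fin (nE + 1)), IsProbabilityMeasure ν →
      ∀ r : X → Fin (nE + 1) → ℝ, Measurable r →
        E01 nE sel ν r
            - (⨅ (r' : X → Fin (nE + 1) → ℝ) (_ : Measurable r'), E01 nE sel ν r')
          ≤ ENNReal.ofReal β *
            (Eell nE ℓ ν r
              - ⨅ (r' : X → Fin (nE + 1) → ℝ) (_ : Measurable r'), Eell nE ℓ ν r') ^ α)
    (μ : Measure (X × ℝ)) [IsProbabilityMeasure μ]
    (h : X → ℝ) (hh : Measurable h)
    (r : X → Fin (nE + 1) → ℝ) (hr : Measurable r) :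
    genErr μ (defLoss nE L c sel h r)
        - (⨅ (h' : X → ℝ) (_ : Measurable h') (r' : X → Fin (nE + 1) → ℝ)
            (_ : Measurable r'), genErr μ (defLoss nE L c sel h' r'))
      ≤ (genErr μ (fun z => L (h z.1) z.2)
            - ⨅ (h' : X → ℝ) (_ : Measurable h'), genErr μ (fun z => L (h' z.1) z.2))
        + ENNReal.ofReal (((nE : ℝ) * (lbar + ∑ j, C j)) ^ (1 - α) * β) *
            (genErr μ (surLossTS nE L c ℓ h r)
              - ⨅ (r' : X → Fin (nE + 1) → ℝ) (_ : Measurable r'),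
                  genErr μ (surLossTS nE L c ℓ h r')) ^ α := by
  classical
  obtain ⟨hα0, hα1⟩ := hα
  have hwmeas : ∀ (g : X → ℝ), Measurable g → ∀ j, Measurable (wgt nE L c g j) := by
    intro g hg j
    have hLg : Measurable fun z : X × ℝ => L (g z.1) z.2 :=
      hLmeas.comp ((hg.comp measurable_fst).prodMk measurable_snd)
    refine Fin.cases ?_ (fun j => ?_) j
    · change Measurable fun z => ∑ j, c j z
      exact Finset.measurable_fun_sum _ fun j _ => hcmeas j
    · exact hLg.add (Finset.measurable_fun_sum _ fun j _ => hcmeas j)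
  have hw0 : ∀ j z, 0 ≤ wgt nE L c h j z := by
    intro j z
    refine Fin.cases ?_ (fun j => ?_) j
    · change 0 ≤ ∑ j, c j z
      exact Finset.sum_nonneg fun j _ => (hc j z).1.le
    · exact add_nonneg (hL _ _).1 (Finset.sum_nonneg fun j _ => (hc j z).1.le)
  have hLm : ∀ (g : X → ℝ), Measurable g → Measurable fun z : X × ℝ => L (g z.1) z.2 :=
    fun g hg => hLmeas.comp ((hg.comp measurable_fst).prodMk measurable_snd)
  have hELfin : ∀ g : X → ℝ, genErr μ (fun z => L (g z.1) z.2) ≠ ∞ := by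
    intro g
    refine ne_top_of_le_ne_top (b := ENNReal.ofReal lbar) ENNReal.ofReal_ne_top ?_
    calc _ ≤ ∫⁻ _, ENNReal.ofReal lbar ∂μ :=
          lintegral_mono fun z => ENNReal.ofReal_le_ofReal (hL _ _).2
      _ = _ := by simp
  have hdef0 : ∀ g q z, 0 ≤ defLoss nE L c sel g q z := by
    intro g q z
    unfold defLoss
    refine add_nonneg ?_ (Finset.sum_nonneg fun j _ => ?_)
    · split_ifs; exacts [(hL _ _).1, le_rfl]
    · split_ifs; exacts [(hc j z).1.le, le_rfl]
  have hselset : ∀ q : X → Fin (nE + 1) → ℝ, Measurable q → ∀ j,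
      MeasurableSet {x : X | sel (q x) = j} :=
    fun q hq j => (hselmeas.comp hq) (measurableSet_singleton j)
  have hdefmeas : ∀ g q, Measurable g → Measurable q → Measurable (defLoss nE L c sel g q) := by
    intro g q hg hq
    unfold defLoss
    refine Measurable.add ?_ (Finset.measurable_fun_sum _ fun j _ => ?_)
    · exact Measurable.ite (measurable_fst (hselset q hq 0)) (hLm g hg) measurable_const
    · exact Measurable.ite (measurable_fst (hselset q hq j.succ)) (hcmeas j) measurable_const
  -- second stage bound
  set M : ℝ := (nE : ℝ) * (lbar + ∑ j, C j) with hM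
  set B : ℝ≥0∞ := ENNReal.ofReal (M ^ (1 - α) * β) *
            (genErr μ (surLossTS nE L c ℓ h r)
              - ⨅ (r' : X → Fin (nE + 1) → ℝ) (_ : Measurable r'),
                  genErr μ (surLossTS nE L c ℓ h r')) ^ α with hB
  have hnE1 : (1:ℝ) ≤ nE := by exact_mod_cast hnE
  have hMpos : 0 < M := by
    have := Finset.sum_nonneg fun (j : Fin nE) (_ : j ∈ univ) => (hC j).le
    rw [hM]; positivity
  have step1 : ∀ r', Measurable r' →
      genErr μ (defLoss nE L c sel h r) ≤ B + genErr μ (defLoss nE L c sel h r') := by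
    intro r' hr'
    obtain ⟨ν, hν⟩ := exists_mix (nE + 1) μ (fun j z => ENNReal.ofReal (wgt nE L c h j z))
      (fun j => (hwmeas h hh j).ennreal_ofReal)
    set T : ℝ≥0∞ := ∫⁻ z, ENNReal.ofReal (nE * (L (h z.1) z.2 + ∑ j, c j z)) ∂μ with hT
    have hbd : ∀ z, L (h z.1) z.2 + ∑ j, c j z ≤ lbar + ∑ j, C j := fun z =>
      add_le_add (hL _ _).2 (Finset.sum_le_sum fun j _ => (hc j z).2)
    have hpos : ∀ z, 0 < L (h z.1) z.2 + ∑ j, c j z := fun z => by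
      have : 0 < ∑ j, c j z :=
        Finset.sum_pos (fun j _ => (hc j z).1) ⟨⟨0, hnE⟩, Finset.mem_univ _⟩
      linarith [(hL (h z.1) z.2).1]
    have hsm : Measurable fun z : X × ℝ => L (h z.1) z.2 + ∑ j, c j z :=
      (hLm h hh).add (Finset.measurable_fun_sum _ fun j _ => hcmeas j)
    have hTM : T ≤ ENNReal.ofReal M := by
      calc T ≤ ∫⁻ _, ENNReal.ofReal M ∂μ := lintegral_mono fun z =>
            ENNReal.ofReal_le_ofReal (mul_le_mul_of_nonneg_left (hbd z) (by positivity))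
        _ = _ := by simp
    have hTtop : T ≠ ∞ := ne_top_of_le_ne_top ENNReal.ofReal_ne_top hTM
    have hT0 : T ≠ 0 := by
      intro h0
      rw [hT, lintegral_eq_zero_iff (hsm.const_mul _).ennreal_ofReal] at h0
      obtain ⟨z, hz⟩ := h0.exists
      have h2 : 0 < (nE : ℝ) * (L (h z.1) z.2 + ∑ j, c j z) := mul_pos (by linarith) (hpos z)
      have h3 : (nE : ℝ) * (L (h z.1) z.2 + ∑ j, c j z) ≤ 0 := ENNReal.ofReal_eq_zero.mp hz
      linarith
    have hνT : ν Set.univ = T := by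
      have := hν (fun _ => 1) measurable_const
      rw [lintegral_one] at this
      rw [this, hT]
      refine lintegral_congr fun z => ?_
      rw [← wgt_sum, ENNReal.ofReal_sum_of_nonneg fun j _ => hw0 j z]
      simp
    set ν' : Measure (X × Fin (nE + 1)) := T⁻¹ • ν with hν'
    have hprob : IsProbabilityMeasure ν' := ⟨by
      rw [hν', Measure.smul_apply, hνT, smul_eq_mul, ENNReal.inv_mul_cancel hT0 hTtop]⟩
    have hTν : ∀ f : X × Fin (nE + 1) → ℝ≥0∞, Measurable f →
        T * ∫⁻ p, f p ∂ν' = ∫⁻ z, ∑ j, ENNReal.ofReal (wgt nE L c h j z) * f (z.1, j) ∂μ := by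
      intro f hf
      rw [hν', lintegral_smul_measure, smul_eq_mul, ← mul_assoc,
        ENNReal.mul_inv_cancel hT0 hTtop, one_mul, hν f hf]
    have hTell : ∀ q, Measurable q →
        T * Eell nE ℓ ν' q = genErr μ (surLossTS nE L c ℓ h q) := by
      intro q hq
      have hm : Measurable fun p : X × Fin (nE + 1) => ENNReal.ofReal (ℓ (q p.1) p.2) :=
        (hℓmeas.comp ((hq.comp measurable_fst).prodMk measurable_snd)).ennreal_ofReal
      unfold Eell genErr
      rw [hTν _ hm]
      refine lintegral_congr fun z => ?_
      rw [← surLossTS_eq, ENNReal.ofReal_sum_of_nonneg fun j _ => mul_nonneg (hw0 j z) (hℓ0 _ _)]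
      exact Finset.sum_congr rfl fun j _ => (ENNReal.ofReal_mul (hw0 j z)).symm
    set K : ℝ≥0∞ := ∫⁻ z, ENNReal.ofReal (((nE : ℝ) - 1) * (L (h z.1) z.2 + ∑ j, c j z)) ∂μ with hK
    have hKtop : K ≠ ∞ := by
      refine ne_top_of_le_ne_top hTtop (lintegral_mono fun z => ENNReal.ofReal_le_ofReal ?_)
      exact mul_le_mul_of_nonneg_right (by linarith) (hpos z).le
    have hT01 : ∀ q, Measurable q →
        T * E01 nE sel ν' q = genErr μ (defLoss nE L c sel h q) + K := by
      intro q hq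
      have hset : MeasurableSet {p : X × Fin (nE + 1) | sel (q p.1) ≠ p.2} :=
        (measurableSet_eq_fun (hselmeas.comp (hq.comp measurable_fst)) measurable_snd).compl
      unfold E01 genErr
      rw [← lintegral_indicator_one hset, hTν _ (measurable_one.indicator hset), hK,
        ← lintegral_add_left (hdefmeas h q hh hq).ennreal_ofReal]
      refine lintegral_congr fun z => ?_
      rw [← ENNReal.ofReal_add (hdef0 _ _ _) (mul_nonneg (by linarith) (hpos z).le), ← wgt_err,
        ENNReal.ofReal_sum_of_nonneg fun j _ => mul_nonneg (hw0 j z) (by split_ifs <;> norm_num)]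
      refine Finset.sum_congr rfl fun j _ => ?_
      by_cases hj : sel (q z.1) = j <;> simp [Set.indicator, hj]
    have hinf : (⨅ (q : X → Fin (nE + 1) → ℝ) (_ : Measurable q),
        genErr μ (surLossTS nE L c ℓ h q))
        = T * ⨅ (q : X → Fin (nE + 1) → ℝ) (_ : Measurable q), Eell nE ℓ ν' q := by
      simp only [ENNReal.mul_iInf_of_ne hT0 hTtop]
      exact iInf_congr fun q => iInf_congr fun hq => (hTell q hq).symm
    have hmain := hcons ν' hprob r hr
    set D := Eell nE ℓ ν' r
      - ⨅ (q : X → Fin (nE + 1) → ℝ) (_ : Measurable q), Eell nE ℓ ν' q with hD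
    have hBD : B = ENNReal.ofReal (M ^ (1 - α) * β) * (T * D) ^ α := by
      rw [hB, hinf, ← hTell r hr, hD, ENNReal.mul_sub (fun _ _ => hTtop)]
    have hTB : T * (ENNReal.ofReal β * D ^ α) ≤ B := by
      rw [hBD, ENNReal.mul_rpow_of_nonneg _ _ hα0.le,
        ENNReal.ofReal_mul (Real.rpow_nonneg hMpos.le _),
        ← ENNReal.ofReal_rpow_of_pos hMpos]
      have hTT : T = T ^ (1 - α) * T ^ α := by
        rw [← ENNReal.rpow_add _ _ hT0 hTtop]; simp
      calc T * (ENNReal.ofReal β * D ^ α)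
          = T ^ (1 - α) * T ^ α * (ENNReal.ofReal β * D ^ α) := by rw [← hTT]
        _ ≤ ENNReal.ofReal M ^ (1 - α) * T ^ α * (ENNReal.ofReal β * D ^ α) := by
            gcongr
        _ = _ := by ring
    have h01 : E01 nE sel ν' r ≤ ENNReal.ofReal β * D ^ α + E01 nE sel ν' r' :=
      (tsub_le_iff_right.mp hmain).trans (by gcongr; exact iInf₂_le r' hr')
    have hfin : genErr μ (defLoss nE L c sel h r) + K
        ≤ (B + genErr μ (defLoss nE L c sel h r')) + K := by
      calc _ = T * E01 nE sel ν' r := (hT01 r hr).symm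
        _ ≤ T * (ENNReal.ofReal β * D ^ α + E01 nE sel ν' r') := by gcongr
        _ = T * (ENNReal.ofReal β * D ^ α) + T * E01 nE sel ν' r' := mul_add _ _ _
        _ ≤ B + (genErr μ (defLoss nE L c sel h r') + K) := by rw [hT01 r' hr']; gcongr
        _ = _ := by ring
    exact (ENNReal.add_le_add_iff_right hKtop).mp hfin
  rw [tsub_le_iff_left, ← tsub_le_iff_right]
  refine le_iInf₂ fun h' hh' => le_iInf₂ fun r' hr' => ?_
  rw [tsub_le_iff_right]
  set S := ⨅ (h' : X → ℝ) (_ : Measurable h'), genErr μ (fun z => L (h' z.1) z.2) with hS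
  have hSle : ∀ g, Measurable g → S ≤ genErr μ (fun z => L (g z.1) z.2) :=
    fun g hg => iInf₂_le g hg
  set h2 : X → ℝ := fun x => if sel (r' x) = 0 then h' x else h x with hh2
  have hh2m : Measurable h2 := Measurable.ite (hselset r' hr' 0) hh' hh
  have hswap : genErr μ (defLoss nE L c sel h r') + genErr μ (fun z => L (h2 z.1) z.2)
      = genErr μ (defLoss nE L c sel h' r') + genErr μ (fun z => L (h z.1) z.2) := by
    unfold genErr
    rw [← lintegral_add_left (hdefmeas h r' hh hr').ennreal_ofReal,
      ← lintegral_add_left (hdefmeas h' r' hh' hr').ennreal_ofReal]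
    refine lintegral_congr fun z => ?_
    rw [← ENNReal.ofReal_add (hdef0 _ _ _) (hL _ _).1,
      ← ENNReal.ofReal_add (hdef0 _ _ _) (hL _ _).1]
    congr 1
    unfold defLoss
    by_cases hz : sel (r' z.1) = 0
    · simp only [hh2, hz, if_true]; ring
    · simp only [hh2, hz, if_false]
  have hStop : S ≠ ∞ := ne_top_of_le_ne_top (hELfin h) (hSle h hh)
  have step2 : genErr μ (defLoss nE L c sel h r')
      ≤ genErr μ (defLoss nE L c sel h' r') + (genErr μ (fun z => L (h z.1) z.2) - S) := by
    refine (ENNReal.add_le_add_iff_right hStop).mp ?_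
    rw [add_assoc, tsub_add_cancel_of_le (hSle h hh), ← hswap]
    gcongr
    exact hSle h2 hh2m
  calc _ ≤ B + genErr μ (defLoss nE L c sel h r') := step1 r' hr'
    _ ≤ B + (genErr μ (defLoss nE L c sel h' r') + (genErr μ (fun z => L (h z.1) z.2) - S)) := by
        gcongr
    _ = _ := by ring
end

section
/- (Corollary 5.2: single-expert single-stage excess error bound, general Γ.) Assume there exist α ∈ (0,1] and β > 0 such that for every probability measure ν on X×{−1,+1} and every measurable r : X → ℝ, E_{ℓ01}(r) − E*_{ℓ01} ≤ β·(E_Φ(r) − E*_Φ)^α. Then for every probability measure μ on X×ℝ, every measurable predictor h : X → ℝ and every measurable rejection function r : X → ℝ, E_{ℓ_def}(h,r) − E*_{ℓ_def} ≤ Γ̄(E_{ℓ_Φ}(h,r) − E*_{ℓ_Φ}), where Γ̄(t) = max{ t, (l̄ + c̄)^{1−α}·β·t^α }. -/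
open MeasureTheory ENNReal

/-- The binary label space `{−1, +1} ⊆ ℝ`. -/
def PMOne : Set ℝ := {-1, 1}

/-- `sign(u) = +1` if `u > 0` and `−1` otherwise. -/
noncomputable def sgn (u : ℝ) : ℝ := if 0 < u then 1 else -1

/-- The deferral (abstention) loss
`ℓ_def(h,r,x,y) = L(h(x),y)·1_{r(x)>0} + c(x,y)·1_{r(x)≤0}`. -/
noncomputable def absLoss {X : Type*} (L : ℝ → ℝ → ℝ) (c : X × ℝ → ℝ)
    (h : X → ℝ) (r : X → ℝ) (z : X × ℝ) : ℝ :=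
  (if 0 < r z.1 then L (h z.1) z.2 else 0) + (if r z.1 ≤ 0 then c z else 0)

/-- The surrogate loss `ℓ_Φ(h,r,x,y) = c(x,y)·Φ(r(x)) + L(h(x),y)·Φ(−r(x))`. -/
noncomputable def absSur {X : Type*} (L : ℝ → ℝ → ℝ) (c : X × ℝ → ℝ) (Φ : ℝ → ℝ)
    (h : X → ℝ) (r : X → ℝ) (z : X × ℝ) : ℝ :=
  c z * Φ (r z.1) + L (h z.1) z.2 * Φ (-r z.1)

/-- Binary zero-one generalization error `E_{ℓ01}(r)`. -/
noncomputable def E01bin {X : Type*} [MeasurableSpace X]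
    (ν : Measure (X × PMOne)) (r : X → ℝ) : ℝ≥0∞ :=
  ν {z | sgn (r z.1) ≠ (z.2 : ℝ)}

/-- Binary margin-based surrogate generalization error `E_Φ(r)`. -/
noncomputable def EPhiBin {X : Type*} [MeasurableSpace X]
    (Φ : ℝ → ℝ) (ν : Measure (X × PMOne)) (r : X → ℝ) : ℝ≥0∞ :=
  ∫⁻ z, ENNReal.ofReal (Φ ((z.2 : ℝ) * r z.1)) ∂ν

open ProbabilityTheory

/-- Conditional expected loss. -/
noncomputable def condL {X : Type*} [MeasurableSpace X] (μ : Measure (X × ℝ)) [IsFiniteMeasure μ]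
    (f : X × ℝ → ℝ) (x : X) : ℝ≥0∞ := ∫⁻ y, ENNReal.ofReal (f (x, y)) ∂(μ.condKernel x)

lemma condL_meas {X : Type*} [MeasurableSpace X] (μ : Measure (X × ℝ)) [IsFiniteMeasure μ]
    (f : X × ℝ → ℝ) (hf : Measurable f) : Measurable (condL μ f) := by
  have : Measurable (fun z => ENNReal.ofReal (f z)) := hf.ennreal_ofReal
  exact this.lintegral_kernel_prod_right'

lemma condL_le {X : Type*} [MeasurableSpace X] (μ : Measure (X × ℝ)) [IsFiniteMeasure μ]
    (f : X × ℝ → ℝ) (b : ℝ) (hf : ∀ z, f z ≤ b) (x : X) : condL μ f x ≤ ENNReal.ofReal b := by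
  unfold condL
  calc _ ≤ ∫⁻ y, ENNReal.ofReal b ∂(μ.condKernel x) :=
        lintegral_mono fun y => ENNReal.ofReal_le_ofReal (hf _)
    _ = _ := by simp

lemma genErr_eq {X : Type*} [MeasurableSpace X] (μ : Measure (X × ℝ)) [IsFiniteMeasure μ]
    (f : X × ℝ → ℝ) (hf : Measurable f) : genErr μ f = ∫⁻ x, condL μ f x ∂μ.fst := by
  unfold genErr condL
  rw [Measure.lintegral_condKernel hf.ennreal_ofReal]

lemma condL_sur {X : Type*} [MeasurableSpace X] (μ : Measure (X × ℝ)) [IsFiniteMeasure μ]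
    (L : ℝ → ℝ → ℝ) (hLmeas : Measurable fun p : ℝ × ℝ => L p.1 p.2)
    (hL : ∀ y' y, 0 ≤ L y' y)
    (c : X × ℝ → ℝ) (hcmeas : Measurable c) (hc : ∀ z, 0 ≤ c z)
    (Φ : ℝ → ℝ) (hΦ0 : ∀ u, 0 ≤ Φ u) (h : X → ℝ) (r : X → ℝ) (x : X) :
    condL μ (absSur L c Φ h r) x = condL μ c x * ENNReal.ofReal (Φ (r x)) +
      condL μ (fun z => L (h z.1) z.2) x * ENNReal.ofReal (Φ (- r x)) := by
  unfold condL absSur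
  have h1 : Measurable fun y => ENNReal.ofReal (c (x, y)) :=
    (hcmeas.comp measurable_prodMk_left).ennreal_ofReal
  have h2 : Measurable fun y => ENNReal.ofReal (L (h x) y) :=
    (hLmeas.comp measurable_prodMk_left).ennreal_ofReal
  rw [← lintegral_mul_const _ h1, ← lintegral_mul_const _ h2,
    ← lintegral_add_left (h1.mul_const _)]
  refine lintegral_congr fun y => ?_
  rw [ENNReal.ofReal_add (mul_nonneg (hc _) (hΦ0 _)) (mul_nonneg (hL _ _) (hΦ0 _)),
    ENNReal.ofReal_mul (hc _), ENNReal.ofReal_mul (hL _ _)]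

lemma condL_abs {X : Type*} [MeasurableSpace X] (μ : Measure (X × ℝ)) [IsFiniteMeasure μ]
    (L : ℝ → ℝ → ℝ) (c : X × ℝ → ℝ) (h : X → ℝ) (r : X → ℝ) (x : X) :
    condL μ (absLoss L c h r) x = if 0 < r x then condL μ (fun z => L (h z.1) z.2) x
      else condL μ c x := by
  unfold condL absLoss
  split_ifs with hx
  · simp [hx, not_le.2 hx]
  · simp [hx, not_lt.1 hx]

lemma mem_pos1 : (1 : ℝ) ∈ PMOne := by simp [PMOne]

lemma mem_neg1 : (-1 : ℝ) ∈ PMOne := by simp [PMOne]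

/-- The label `1`. -/
noncomputable def pos1 : PMOne := ⟨1, mem_pos1⟩

/-- The label `-1`. -/
noncomputable def neg1 : PMOne := ⟨-1, mem_neg1⟩

/-- The binary measure with weights `wp` on label `1` and `wm` on label `-1`. -/
noncomputable def nu0 {X : Type*} [MeasurableSpace X] (m : Measure X) (wp wm : X → ℝ≥0∞) :
    Measure (X × PMOne) :=
  (m.withDensity wp).map (fun x => (x, pos1)) +
  (m.withDensity wm).map (fun x => (x, neg1))

lemma lint_nu0 {X : Type*} [MeasurableSpace X] (m : Measure X) (wp wm : X → ℝ≥0∞)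
    (hp : Measurable wp) (hm : Measurable wm) (f : X × PMOne → ℝ≥0∞) (hf : Measurable f) :
    ∫⁻ z, f z ∂(nu0 m wp wm) = ∫⁻ x, (wp x * f (x, pos1) +
      wm x * f (x, neg1)) ∂m := by
  have e1 : Measurable (fun x : X => (x, pos1)) := by fun_prop
  have e2 : Measurable (fun x : X => (x, neg1)) := by fun_prop
  have g1 : Measurable fun x : X => f (x, pos1) := hf.comp e1
  have g2 : Measurable fun x : X => f (x, neg1) := hf.comp e2
  unfold nu0
  rw [lintegral_add_measure, lintegral_map hf e1, lintegral_map hf e2,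
    lintegral_withDensity_eq_lintegral_mul _ hp g1,
    lintegral_withDensity_eq_lintegral_mul _ hm g2,
    ← lintegral_add_left (hp.mul g1)]
  rfl

lemma EPhi_nu0 {X : Type*} [MeasurableSpace X] (m : Measure X) (wp wm : X → ℝ≥0∞)
    (hp : Measurable wp) (hm : Measurable wm) (Φ : ℝ → ℝ) (hΦ : Measurable Φ)
    (r : X → ℝ) (hr : Measurable r) :
    EPhiBin Φ (nu0 m wp wm) r = ∫⁻ x, (wp x * ENNReal.ofReal (Φ (r x)) +
      wm x * ENNReal.ofReal (Φ (-r x))) ∂m := by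
  unfold EPhiBin
  rw [lint_nu0 m wp wm hp hm]
  · simp [pos1, neg1]
  · have : Measurable fun z : X × PMOne => (z.2 : ℝ) * r z.1 := by fun_prop
    exact (hΦ.comp this).ennreal_ofReal

lemma E01_nu0 {X : Type*} [MeasurableSpace X] (m : Measure X) (wp wm : X → ℝ≥0∞)
    (hp : Measurable wp) (hm : Measurable wm) (r : X → ℝ) (hr : Measurable r) :
    E01bin (nu0 m wp wm) r = ∫⁻ x, (if 0 < r x then wm x else wp x) ∂m := by
  have hs : Measurable sgn :=
    Measurable.ite measurableSet_Ioi measurable_const measurable_const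
  have hS : MeasurableSet {z : X × PMOne | sgn (r z.1) ≠ (z.2 : ℝ)} := by
    have h1 : Measurable fun z : X × PMOne => sgn (r z.1) := hs.comp (hr.comp measurable_fst)
    have h2 : Measurable fun z : X × PMOne => (z.2 : ℝ) := by fun_prop
    exact (measurableSet_eq_fun h1 h2).compl
  unfold E01bin
  rw [← lintegral_indicator_one hS, lint_nu0 m wp wm hp hm _ (measurable_one.indicator hS)]
  refine lintegral_congr fun x => ?_
  by_cases hx : 0 < r x
  · have : (1:ℝ) ≠ -1 := by norm_num
    simp [Set.indicator, sgn, hx, this, pos1, neg1]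
  · have : (-1:ℝ) ≠ 1 := by norm_num
    simp [Set.indicator, sgn, hx, this, pos1, neg1]

lemma scaled_cons {X : Type*} [MeasurableSpace X] (Φ : ℝ → ℝ)
    (α β K : ℝ) (hα : α ∈ Set.Ioc (0 : ℝ) 1) (hβ : 0 < β) (hK : 0 < K)
    (hcons : ∀ ν : Measure (X × PMOne), IsProbabilityMeasure ν →
      ∀ r : X → ℝ, Measurable r →
        E01bin ν r - (⨅ (r' : X → ℝ) (_ : Measurable r'), E01bin ν r')
          ≤ ENNReal.ofReal β *
            (EPhiBin Φ ν r - ⨅ (r' : X → ℝ) (_ : Measurable r'), EPhiBin Φ ν r') ^ α)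
    (ν : Measure (X × PMOne)) (hν : ν Set.univ ≤ ENNReal.ofReal K)
    (r : X → ℝ) (hr : Measurable r) :
    E01bin ν r - (⨅ (r' : X → ℝ) (_ : Measurable r'), E01bin ν r')
          ≤ ENNReal.ofReal (K ^ (1 - α) * β) *
            (EPhiBin Φ ν r - ⨅ (r' : X → ℝ) (_ : Measurable r'), EPhiBin Φ ν r') ^ α := by
  set M := ν Set.univ with hM
  by_cases hM0 : M = 0
  · have : E01bin ν r = 0 := by
      have : E01bin ν r ≤ M := measure_mono (Set.subset_univ _)
      simpa [hM0] using this
    simp [this]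
  have hMt : M ≠ ∞ := ne_top_of_le_ne_top ENNReal.ofReal_ne_top hν
  have hi0 : M⁻¹ ≠ 0 := ENNReal.inv_ne_zero.2 hMt
  have hit : M⁻¹ ≠ ∞ := ENNReal.inv_ne_top.2 hM0
  have hp : IsProbabilityMeasure (M⁻¹ • ν) := ⟨by
    simp [← hM, ENNReal.inv_mul_cancel hM0 hMt]⟩
  have key := hcons _ hp r hr
  have a1 : ∀ r', E01bin (M⁻¹ • ν) r' = M⁻¹ * E01bin ν r' := fun r' => by simp [E01bin]
  have a2 : ∀ r', EPhiBin Φ (M⁻¹ • ν) r' = M⁻¹ * EPhiBin Φ ν r' := fun r' => by simp [EPhiBin]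
  simp only [a1, a2, ← ENNReal.mul_iInf_of_ne hi0 hit] at key
  rw [← ENNReal.mul_sub (fun _ _ => hit), ← ENNReal.mul_sub (fun _ _ => hit),
    ENNReal.mul_rpow_of_nonneg _ _ hα.1.le] at key
  set a := E01bin ν r - (⨅ (r' : X → ℝ) (_ : Measurable r'), E01bin ν r')
  set b := EPhiBin Φ ν r - ⨅ (r' : X → ℝ) (_ : Measurable r'), EPhiBin Φ ν r'
  have hpow : M * M⁻¹ ^ α = M ^ (1 - α) := by
    rw [ENNReal.inv_rpow, ← ENNReal.rpow_neg, sub_eq_add_neg, ENNReal.rpow_add _ _ hM0 hMt,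
      ENNReal.rpow_one]
  calc a = M * (M⁻¹ * a) := by rw [← mul_assoc, ENNReal.mul_inv_cancel hM0 hMt, one_mul]
    _ ≤ M * (ENNReal.ofReal β * (M⁻¹ ^ α * b ^ α)) := by gcongr
    _ = (M * M⁻¹ ^ α) * ENNReal.ofReal β * b ^ α := by ring
    _ ≤ ENNReal.ofReal (K ^ (1 - α) * β) * b ^ α := by
      rw [hpow, ENNReal.ofReal_mul (by positivity), ← ENNReal.ofReal_rpow_of_pos hK]
      have : 0 ≤ 1 - α := by linarith [hα.2]
      gcongr

/-- Corollary 5.2: single-expert single-stage excess error bound,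
general `Γ`. -/
theorem single_expert_single_stage_excess_error_bound {X : Type*} [MeasurableSpace X]
    (lbar cbar : ℝ) (hlbar : 0 < lbar) (hcbar : 0 < cbar)
    (L : ℝ → ℝ → ℝ) (hLmeas : Measurable fun p : ℝ × ℝ => L p.1 p.2)
    (hL : ∀ y' y, L y' y ∈ Set.Icc 0 lbar)
    (c : X × ℝ → ℝ) (hcmeas : Measurable c) (hc : ∀ z, c z ∈ Set.Ioc 0 cbar)
    (Φ : ℝ → ℝ) (hΦmeas : Measurable Φ) (hΦmono : Antitone Φ)
    (hΦ0 : ∀ u, 0 ≤ Φ u) (hΦ1 : ∀ u, u ≤ 0 → 1 ≤ Φ u)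
    (α β : ℝ) (hα : α ∈ Set.Ioc (0 : ℝ) 1) (hβ : 0 < β)
    (hcons : ∀ ν : Measure (X × PMOne), IsProbabilityMeasure ν →
      ∀ r : X → ℝ, Measurable r →
        E01bin ν r - (⨅ (r' : X → ℝ) (_ : Measurable r'), E01bin ν r')
          ≤ ENNReal.ofReal β *
            (EPhiBin Φ ν r - ⨅ (r' : X → ℝ) (_ : Measurable r'), EPhiBin Φ ν r') ^ α)
    (μ : Measure (X × ℝ)) [IsProbabilityMeasure μ]
    (h : X → ℝ) (hh : Measurable h) (r : X → ℝ) (hr : Measurable r) :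
    genErr μ (absLoss L c h r)
        - (⨅ (h' : X → ℝ) (_ : Measurable h') (r' : X → ℝ) (_ : Measurable r'),
            genErr μ (absLoss L c h' r'))
      ≤ max
          (genErr μ (absSur L c Φ h r)
            - ⨅ (h' : X → ℝ) (_ : Measurable h') (r' : X → ℝ) (_ : Measurable r'),
                genErr μ (absSur L c Φ h' r'))
          (ENNReal.ofReal ((lbar + cbar) ^ (1 - α) * β) *
            (genErr μ (absSur L c Φ h r)
              - ⨅ (h' : X → ℝ) (_ : Measurable h') (r' : X → ℝ) (_ : Measurable r'),
                  genErr μ (absSur L c Φ h' r')) ^ α) := by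
  classical
  have hL0 : ∀ y' y, 0 ≤ L y' y := fun a b => (hL a b).1
  have hc0 : ∀ z, 0 ≤ c z := fun z => (hc z).1.le
  have hLm : ∀ g : X → ℝ, Measurable g → Measurable fun z : X × ℝ => L (g z.1) z.2 :=
    fun g hg => hLmeas.comp ((hg.comp measurable_fst).prodMk measurable_snd)
  have hSurm : ∀ g s : X → ℝ, Measurable g → Measurable s → Measurable (absSur L c Φ g s) := by
    intro g s hg hs
    exact (hcmeas.mul (hΦmeas.comp (hs.comp measurable_fst))).add
      ((hLm g hg).mul (hΦmeas.comp (hs.comp measurable_fst).neg))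
  have hAbsm : ∀ g s : X → ℝ, Measurable g → Measurable s → Measurable (absLoss L c g s) := by
    intro g s hg hs
    exact (Measurable.ite ((hs.comp measurable_fst) measurableSet_Ioi) (hLm g hg)
      measurable_const).add (Measurable.ite ((hs.comp measurable_fst) measurableSet_Iic) hcmeas
      measurable_const)
  set m := μ.fst with hm
  set C := condL μ c with hC
  set G : (X → ℝ) → X → ℝ≥0∞ := fun g => condL μ (fun z => L (g z.1) z.2) with hG
  have hCm : Measurable C := condL_meas μ c hcmeas
  have hGm : ∀ g, Measurable g → Measurable (G g) := fun g hg => condL_meas μ _ (hLm g hg)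
  have hCb : ∀ x, C x ≤ ENNReal.ofReal cbar := condL_le μ c cbar fun z => (hc z).2
  have hGb : ∀ g x, G g x ≤ ENNReal.ofReal lbar := fun g => condL_le μ _ lbar fun z => (hL _ _).2
  have hGloc : ∀ g g' x, g x = g' x → G g x = G g' x := by
    intro g g' x e
    simp only [hG, condL, e]
  have hSur : ∀ g s : X → ℝ, Measurable g → Measurable s → genErr μ (absSur L c Φ g s) =
      ∫⁻ x, (C x * ENNReal.ofReal (Φ (s x)) + G g x * ENNReal.ofReal (Φ (-s x))) ∂m := by
    intro g s hg hs
    rw [genErr_eq μ _ (hSurm g s hg hs)]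
    exact lintegral_congr fun x => condL_sur μ L hLmeas hL0 c hcmeas hc0 Φ hΦ0 g s x
  have hAbs : ∀ g s : X → ℝ, Measurable g → Measurable s → genErr μ (absLoss L c g s) =
      ∫⁻ x, (if 0 < s x then G g x else C x) ∂m := by
    intro g s hg hs
    rw [genErr_eq μ _ (hAbsm g s hg hs)]
    exact lintegral_congr fun x => condL_abs μ L c g s x
  have hΦr : ∀ s : X → ℝ, Measurable s → Measurable fun x => ENNReal.ofReal (Φ (s x)) :=
    fun s hs => (hΦmeas.comp hs).ennreal_ofReal
  set Es := ⨅ (h' : X → ℝ) (_ : Measurable h') (r' : X → ℝ) (_ : Measurable r'),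
                genErr μ (absSur L c Φ h' r') with hEs
  have hEsle : ∀ g s : X → ℝ, Measurable g → Measurable s → Es ≤ genErr μ (absSur L c Φ g s) :=
    fun g s hg hs => iInf₂_le_of_le g hg (iInf₂_le s hs)
  have hm1 : IsProbabilityMeasure m := by rw [hm]; infer_instance
  have hEst : Es ≠ ∞ := by
    refine ne_top_of_le_ne_top ?_ (hEsle (fun _ => 0) (fun _ => 0) measurable_const
      measurable_const)
    rw [hSur _ _ measurable_const measurable_const]
    have : ∫⁻ x, (C x * ENNReal.ofReal (Φ 0) + G (fun _ => 0) x * ENNReal.ofReal (Φ (-0))) ∂m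
      ≤ ∫⁻ x, (ENNReal.ofReal cbar * ENNReal.ofReal (Φ 0)
        + ENNReal.ofReal lbar * ENNReal.ofReal (Φ (-0))) ∂m := by
      refine lintegral_mono fun x => ?_
      have := hCb x
      have := hGb (fun _ => 0) x
      dsimp only
      gcongr
    refine ne_top_of_le_ne_top ?_ this
    rw [lintegral_const, measure_univ, mul_one]
    exact ENNReal.add_ne_top.2 ⟨ENNReal.mul_ne_top ENNReal.ofReal_ne_top ENNReal.ofReal_ne_top,
      ENNReal.mul_ne_top ENNReal.ofReal_ne_top ENNReal.ofReal_ne_top⟩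
  refine le_max_of_le_right ?_
  set t := genErr μ (absSur L c Φ h r) - Es with ht
  rw [tsub_le_iff_left, add_comm, ← tsub_le_iff_left]
  refine le_iInf₂ fun h' hh' => le_iInf₂ fun r' hr' => ?_
  rw [tsub_le_iff_left]
  -- comparator loss
  set l := G h with hl
  set ls : X → ℝ≥0∞ := fun x => min (G h x) (G h' x) with hls
  have hlm : Measurable l := hGm h hh
  have hlsm : Measurable ls := (hGm h hh).min (hGm h' hh')
  have hlsl : ∀ x, ls x ≤ l x := fun x => min_le_left _ _
  have hlt : ∀ x, l x ≠ ∞ := fun x => ne_top_of_le_ne_top ENNReal.ofReal_ne_top (hGb h x)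
  have hrS : MeasurableSet {x | 0 < r x} := hr measurableSet_Ioi
  have hAS : MeasurableSet {x | 0 < r x ∧ ls x ≤ C x} :=
    hrS.inter (measurableSet_le hlsm hCm)
  set wp : X → ℝ≥0∞ := fun x => if 0 < r x ∧ ls x ≤ C x then 0 else C x with hwp
  set wm : X → ℝ≥0∞ := fun x => if 0 < r x ∧ ls x ≤ C x then l x - ls x else
    if 0 < r x then l x else ls x with hwm
  have hwpm : Measurable wp := Measurable.ite hAS measurable_const hCm
  have hwmm : Measurable wm := Measurable.ite hAS (hlm.sub hlsm) (Measurable.ite hrS hlm hlsm)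
  set ν := nu0 m wp wm with hν
  have hmass : ν Set.univ ≤ ENNReal.ofReal (lbar + cbar) := by
    rw [← lintegral_one, hν, lint_nu0 m wp wm hwpm hwmm _ measurable_const]
    have : ∫⁻ x, (wp x * 1 + wm x * 1) ∂m ≤ ∫⁻ x, ENNReal.ofReal (lbar + cbar) ∂m := by
      refine lintegral_mono fun x => ?_
      have h1 : wp x ≤ ENNReal.ofReal cbar := by
        simp only [hwp]; split_ifs
        · exact zero_le
        · exact hCb x
      have h2 : wm x ≤ ENNReal.ofReal lbar := by
        refine le_trans ?_ (hGb h x)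
        simp only [hwm]; split_ifs
        · exact tsub_le_self
        · exact le_rfl
        · exact hlsl x
      rw [add_comm lbar, ENNReal.ofReal_add hcbar.le hlbar.le, mul_one, mul_one]
      exact add_le_add h1 h2
    simpa using this
  have key := scaled_cons Φ α β (lbar + cbar) hα hβ (by positivity) hcons ν hmass r hr
  -- surrogate part
  have hT : EPhiBin Φ ν r - (⨅ (r' : X → ℝ) (_ : Measurable r'), EPhiBin Φ ν r') ≤ t := by
    rw [tsub_le_iff_left, add_comm, ← tsub_le_iff_left]
    refine le_iInf₂ fun q hq => ?_
    rw [tsub_le_iff_left]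
    have hBS : MeasurableSet {x | G h' x ≤ G h x ∧ ¬ (0 < r x ∧ C x < ls x)} :=
      (measurableSet_le (hGm h' hh') hlm).inter
        (hrS.inter (measurableSet_lt hCm hlsm)).compl
    set h3 : X → ℝ := fun x => if G h' x ≤ G h x ∧ ¬ (0 < r x ∧ C x < ls x) then h' x else h x
      with hh3
    set r3 : X → ℝ := fun x => if 0 < r x ∧ ls x ≤ C x then r x else q x with hr3
    have h3m : Measurable h3 := Measurable.ite hBS hh' hh
    have r3m : Measurable r3 := Measurable.ite hAS hr hq
    have main : Es + EPhiBin Φ ν r ≤ genErr μ (absSur L c Φ h r) + EPhiBin Φ ν q := by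
      refine le_trans (add_le_add_left (hEsle h3 r3 h3m r3m) _) ?_
      have m1 : Measurable fun x => C x * ENNReal.ofReal (Φ (r3 x)) +
          G h3 x * ENNReal.ofReal (Φ (-r3 x)) :=
        (hCm.mul (hΦr _ r3m)).add ((hGm _ h3m).mul (hΦr _ r3m.neg))
      have m2 : Measurable fun x => C x * ENNReal.ofReal (Φ (r x)) +
          G h x * ENNReal.ofReal (Φ (-r x)) :=
        (hCm.mul (hΦr _ hr)).add (hlm.mul (hΦr _ hr.neg))
      rw [hSur _ _ h3m r3m, hSur _ _ hh hr, hν, EPhi_nu0 m wp wm hwpm hwmm Φ hΦmeas r hr,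
        EPhi_nu0 m wp wm hwpm hwmm Φ hΦmeas q hq,
        ← lintegral_add_left m1, ← lintegral_add_left m2]
      refine lintegral_mono fun x => ?_
      have e1 : ¬ (0 < r x ∧ C x < ls x) → G h3 x = ls x := by
        intro hx
        by_cases hy : G h' x ≤ G h x
        · rw [hGloc h3 h' x (by simp only [hh3]; rw [if_pos ⟨hy, hx⟩])]
          exact (min_eq_right hy).symm
        · rw [hGloc h3 h x (by simp only [hh3]; rw [if_neg (fun hz => hy hz.1)])]
          exact (min_eq_left (not_le.1 hy).le).symm
      have e2 : (0 < r x ∧ C x < ls x) → G h3 x = l x := by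
        intro hx
        exact hGloc h3 h x (by simp only [hh3]; rw [if_neg (fun hz => hz.2 hx)])
      by_cases hA : 0 < r x ∧ ls x ≤ C x
      · rw [e1 (fun hz => not_lt.2 hA.2 hz.2)]
        simp only [hwp, hwm, hr3, if_pos hA, zero_mul, zero_add]
        rw [add_assoc, ← add_mul, add_tsub_cancel_of_le (hlsl x)]
        exact le_self_add
      · by_cases hx : 0 < r x
        · rw [e2 ⟨hx, lt_of_not_ge fun hz => hA ⟨hx, hz⟩⟩]
          simp only [hwp, hwm, hr3, if_neg hA, if_pos hx]
          rw [add_comm]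
        · rw [e1 (fun hz => hx hz.1)]
          simp only [hwp, hwm, hr3, if_neg hA, if_neg hx]
          rw [add_comm]
          have := hlsl x
          gcongr
    rw [ht]
    calc EPhiBin Φ ν r ≤ genErr μ (absSur L c Φ h r) + EPhiBin Φ ν q - Es :=
          ENNReal.le_sub_of_add_le_left hEst main
      _ ≤ _ := by
          rw [tsub_le_iff_left]
          calc _ ≤ (Es + (genErr μ (absSur L c Φ h r) - Es)) + EPhiBin Φ ν q := by
                gcongr; exact le_add_tsub
            _ = _ := by rw [add_assoc]
  -- deferral part
  set r0 : X → ℝ := fun x => if 0 < r x then -1 else if C x ≤ ls x then -1 else 1 with hr0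
  have r0m : Measurable r0 := Measurable.ite hrS measurable_const
    (Measurable.ite (measurableSet_le hCm hlsm) measurable_const measurable_const)
  have hcomp : ∫⁻ x, min (ls x) (C x) ∂m ≤ genErr μ (absLoss L c h' r') := by
    rw [hAbs _ _ hh' hr']
    refine lintegral_mono fun x => ?_
    dsimp only
    split_ifs
    · exact (min_le_left _ _).trans (min_le_right _ _)
    · exact min_le_right _ _
  have hE0t : E01bin ν r0 ≠ ∞ := ne_top_of_le_ne_top ENNReal.ofReal_ne_top
    ((measure_mono (Set.subset_univ _)).trans hmass)
  have hdef : E01bin ν r0 + genErr μ (absLoss L c h r)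
      ≤ E01bin ν r + ∫⁻ x, min (ls x) (C x) ∂m := by
    have m1 : Measurable fun x => if 0 < r0 x then wm x else wp x :=
      Measurable.ite (r0m measurableSet_Ioi) hwmm hwpm
    have m2 : Measurable fun x => if 0 < r x then wm x else wp x :=
      Measurable.ite hrS hwmm hwpm
    rw [hAbs _ _ hh hr, hν, E01_nu0 m wp wm hwpm hwmm r hr, E01_nu0 m wp wm hwpm hwmm r0 r0m,
      ← lintegral_add_left m1, ← lintegral_add_left m2]
    refine lintegral_mono fun x => ?_
    have n1 : ¬ (0:ℝ) < -1 := by norm_num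
    by_cases hA : 0 < r x ∧ ls x ≤ C x
    · simp only [hwp, hwm, hr0, if_pos hA, if_pos hA.1, if_neg n1, zero_add, min_eq_left hA.2]
      exact le_tsub_add
    · by_cases hx : 0 < r x
      · have hz : C x ≤ ls x := (lt_of_not_ge fun hz => hA ⟨hx, hz⟩).le
        simp only [hwp, hwm, hr0, if_neg hA, if_pos hx, if_neg n1, min_eq_right hz]
        rw [add_comm]
      · by_cases hz : C x ≤ ls x
        · simp only [hwp, hwm, hr0, if_neg hA, if_neg hx, if_pos hz, if_neg n1, min_eq_right hz]
          exact le_rfl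
        · simp only [hwp, hwm, hr0, if_neg hA, if_neg hx, if_neg hz, zero_lt_one, if_true,
            min_eq_left (not_le.1 hz).le]
          rw [add_comm]
  calc genErr μ (absLoss L c h r)
      ≤ E01bin ν r + ∫⁻ x, min (ls x) (C x) ∂m - E01bin ν r0 :=
        ENNReal.le_sub_of_add_le_left hE0t hdef
    _ ≤ (E01bin ν r - E01bin ν r0) + ∫⁻ x, min (ls x) (C x) ∂m := by
        rw [tsub_le_iff_left, ← add_assoc]
        gcongr; exact le_add_tsub
    _ ≤ (E01bin ν r - ⨅ (r' : X → ℝ) (_ : Measurable r'), E01bin ν r')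
          + genErr μ (absLoss L c h' r') := by
        have hi : (⨅ (r' : X → ℝ) (_ : Measurable r'), E01bin ν r') ≤ E01bin ν r0 :=
          iInf₂_le r0 r0m
        exact add_le_add (tsub_le_tsub_left hi _) hcomp
    _ ≤ _ := by
        refine add_le_add_left (key.trans ?_) _
        have := hα.1.le
        gcongr
end

section
/- (Theorem 5.1, conditional form: single-expert single-stage bound.) Assume the pointwise Γ-consistency hypothesis holds with Γ(t) = β·t^α for some α ∈ (0,1] and β > 0. Then for every L ∈ A and every s ∈ S, D(L,s) − D* ≤ Γ̄(C_Φ(L,s) − inf{C_Φ(L',s') : L' ∈ A, s' ∈ S}), where Γ̄(t) = max{ t, (l̄ + c̄_max)^{1−α}·β·t^α }. -/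
/-- Conditional deferral error `D(L,s) = L·1_{s>0} + c̄·1_{s≤0}`. -/
noncomputable def DcondBin (cbar : ℝ) (L : ℝ) (s : ℝ) : ℝ :=
  (if 0 < s then L else 0) + (if s ≤ 0 then cbar else 0)

/-- Conditional surrogate error `C_Φ(L,s) = c̄·Φ(s) + L·Φ(−s)`. -/
noncomputable def CcondBin (cbar : ℝ) (Φ : ℝ → ℝ) (L : ℝ) (s : ℝ) : ℝ :=
  cbar * Φ s + L * Φ (-s)

lemma bin_aux
    (lbar cbarmax : ℝ) (cbar : ℝ) (hcbar : cbar ∈ Set.Icc 0 cbarmax)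
    (S : Set ℝ) (hSpos : ∃ s ∈ S, 0 < s) (hSnonpos : ∃ s ∈ S, s ≤ 0)
    (Φ : ℝ → ℝ)
    (α β : ℝ) (hα : α ∈ Set.Ioc (0 : ℝ) 1) (hβ : 0 < β)
    (hcons : ∀ p ∈ Set.Icc (0 : ℝ) 1, ∀ s ∈ S,
      (p * (if s ≤ 0 then (1 : ℝ) else 0) + (1 - p) * (if 0 < s then (1 : ℝ) else 0))
          - sInf {v | ∃ s' ∈ S,
              v = p * (if s' ≤ 0 then (1 : ℝ) else 0)
                + (1 - p) * (if 0 < s' then (1 : ℝ) else 0)}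
        ≤ β * ((p * Φ s + (1 - p) * Φ (-s))
            - sInf {v | ∃ s' ∈ S, v = p * Φ s' + (1 - p) * Φ (-s')}) ^ α)
    (l : ℝ) (hl : l ∈ Set.Icc 0 lbar) (hpos : 0 < l + cbar) (s : ℝ) (hs : s ∈ S)
    (V T : ℝ) (hV : ∀ s' ∈ S, V ≤ CcondBin cbar Φ l s') (hT : CcondBin cbar Φ l s - V ≤ T) :
    DcondBin cbar l s - min l cbar ≤ (lbar + cbarmax) ^ (1 - α) * β * T ^ α := by
  obtain ⟨hc0, hc1⟩ := hcbar
  obtain ⟨hl0, hl1⟩ := hl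
  obtain ⟨hα0, hα1⟩ := hα
  have hT0 : 0 ≤ T := by linarith [hV s hs]
  set q := l + cbar with hq
  have hp : cbar / q ∈ Set.Icc (0 : ℝ) 1 :=
    ⟨by positivity, (div_le_one hpos).2 (by linarith)⟩
  have h1p : 1 - cbar / q = l / q := by field_simp; linarith
  have key := hcons _ hp s hs
  rw [h1p] at key
  have hlq : 0 ≤ l / q := by positivity
  have hcq : 0 ≤ cbar / q := by positivity
  have hbdd : BddBelow {v | ∃ s' ∈ S,
              v = cbar / q * (if s' ≤ 0 then (1 : ℝ) else 0)
                + l / q * (if 0 < s' then (1 : ℝ) else 0)} := by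
    refine ⟨0, ?_⟩
    rintro v ⟨s', -, rfl⟩
    split_ifs <;> simp <;> linarith
  have hi1 : sInf {v | ∃ s' ∈ S,
              v = cbar / q * (if s' ≤ 0 then (1 : ℝ) else 0)
                + l / q * (if 0 < s' then (1 : ℝ) else 0)} ≤ min l cbar / q := by
    rcases min_choice l cbar with h | h
    · rw [h]
      obtain ⟨s', h', h''⟩ := hSpos
      exact csInf_le hbdd ⟨s', h', by simp [h'', not_le.2 h'']⟩
    · rw [h]
      obtain ⟨s', h', h''⟩ := hSnonpos
      exact csInf_le hbdd ⟨s', h', by simp [h'', not_lt.2 h'']⟩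
  have hi2 : V / q ≤ sInf {v | ∃ s' ∈ S, v = cbar / q * Φ s' + l / q * Φ (-s')} := by
    refine le_csInf ⟨_, s, hs, rfl⟩ ?_
    rintro v ⟨s', h', rfl⟩
    have := hV s' h'
    unfold CcondBin at this
    calc V / q ≤ (cbar * Φ s' + l * Φ (-s')) / q := by gcongr
      _ = _ := by ring
  have hi3 : sInf {v | ∃ s' ∈ S, v = cbar / q * Φ s' + l / q * Φ (-s')}
      ≤ cbar / q * Φ s + l / q * Φ (-s) := by
    refine csInf_le ⟨V / q, ?_⟩ ⟨s, hs, rfl⟩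
    rintro v ⟨s', h', rfl⟩
    have := hV s' h'
    unfold CcondBin at this
    calc V / q ≤ (cbar * Φ s' + l * Φ (-s')) / q := by gcongr
      _ = _ := by ring
  have hle : (cbar / q * Φ s + l / q * Φ (-s))
      - sInf {v | ∃ s' ∈ S, v = cbar / q * Φ s' + l / q * Φ (-s')} ≤ T / q := by
    have h1 : cbar / q * Φ s + l / q * Φ (-s) = CcondBin cbar Φ l s / q := by
      unfold CcondBin; ring
    have h2 : (CcondBin cbar Φ l s - V) / q ≤ T / q := by gcongr
    rw [sub_div] at h2
    linarith
  have hpow := Real.rpow_le_rpow (sub_nonneg.2 hi3) hle hα0.le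
  have hD : cbar / q * (if s ≤ 0 then (1 : ℝ) else 0) + l / q * (if 0 < s then (1 : ℝ) else 0)
      = DcondBin cbar l s / q := by
    unfold DcondBin
    split_ifs <;> ring
  rw [hD] at key
  have hfin : (DcondBin cbar l s - min l cbar) / q ≤ β * (T / q) ^ α := by
    rw [sub_div]
    have := mul_le_mul_of_nonneg_left hpow hβ.le
    linarith
  rw [div_le_iff₀ hpos] at hfin
  have hTa : 0 ≤ T ^ α := Real.rpow_nonneg hT0 _
  calc DcondBin cbar l s - min l cbar ≤ β * (T / q) ^ α * q := hfin
    _ = q ^ (1 - α) * β * T ^ α := by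
      rw [Real.div_rpow hT0 hpos.le, Real.rpow_sub hpos, Real.rpow_one]; ring
    _ ≤ _ := by
      have : q ^ (1 - α) ≤ (lbar + cbarmax) ^ (1 - α) :=
        Real.rpow_le_rpow hpos.le (by linarith) (by linarith)
      gcongr

/-- Theorem 5.1, conditional form: single-expert single-stage bound. -/
theorem single_expert_single_stage_conditional_bound
    (lbar cbarmax : ℝ) (hlbar : 0 < lbar) (hcbarmax : 0 < cbarmax)
    (A : Set ℝ) (hA : A.Nonempty) (hAsub : A ⊆ Set.Icc 0 lbar)
    (cbar : ℝ) (hcbar : cbar ∈ Set.Icc 0 cbarmax)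
    (S : Set ℝ) (hSpos : ∃ s ∈ S, 0 < s) (hSnonpos : ∃ s ∈ S, s ≤ 0)
    (Φ : ℝ → ℝ) (hΦ0 : ∀ u, 0 ≤ Φ u)
    (hΦ1 : ∀ u : ℝ, (if u ≤ 0 then (1 : ℝ) else 0) ≤ Φ u)
    (α β : ℝ) (hα : α ∈ Set.Ioc (0 : ℝ) 1) (hβ : 0 < β)
    (hcons : ∀ p ∈ Set.Icc (0 : ℝ) 1, ∀ s ∈ S,
      (p * (if s ≤ 0 then (1 : ℝ) else 0) + (1 - p) * (if 0 < s then (1 : ℝ) else 0))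
          - sInf {v | ∃ s' ∈ S,
              v = p * (if s' ≤ 0 then (1 : ℝ) else 0)
                + (1 - p) * (if 0 < s' then (1 : ℝ) else 0)}
        ≤ β * ((p * Φ s + (1 - p) * Φ (-s))
            - sInf {v | ∃ s' ∈ S, v = p * Φ s' + (1 - p) * Φ (-s')}) ^ α)
    (L : ℝ) (hL : L ∈ A) (s : ℝ) (hs : s ∈ S) :
    DcondBin cbar L s - min (sInf A) cbar ≤
      max (CcondBin cbar Φ L s - sInf {v | ∃ L' ∈ A, ∃ s' ∈ S, v = CcondBin cbar Φ L' s'})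
        ((lbar + cbarmax) ^ (1 - α) * β
          * (CcondBin cbar Φ L s
              - sInf {v | ∃ L' ∈ A, ∃ s' ∈ S, v = CcondBin cbar Φ L' s'}) ^ α) := by
  have hbddA : BddBelow A := ⟨0, fun x hx => (hAsub hx).1⟩
  have hc00 : 0 ≤ sInf A := le_csInf hA fun x hx => (hAsub hx).1
  have hc0L : sInf A ≤ L := csInf_le hbddA hL
  have hLb := hAsub hL
  have hc := hcbar
  obtain ⟨hcb0, hcb1⟩ := hc
  have hVle : ∀ L' ∈ A, ∀ s' ∈ S,
      sInf {v | ∃ L' ∈ A, ∃ s' ∈ S, v = CcondBin cbar Φ L' s'} ≤ CcondBin cbar Φ L' s' := by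
    intro L' hL' s' hs'
    refine csInf_le ⟨0, ?_⟩ ⟨L', hL', s', hs', rfl⟩
    rintro v ⟨L₁, h1, s₁, -, rfl⟩
    have := (hAsub h1).1
    have := hΦ0 s₁
    have := hΦ0 (-s₁)
    unfold CcondBin
    positivity
  set V := sInf {v | ∃ L' ∈ A, ∃ s' ∈ S, v = CcondBin cbar Φ L' s'} with hVdef
  have hV0 : ∀ s' ∈ S, V ≤ CcondBin cbar Φ (sInf A) s' := by
    intro s' hs'
    unfold CcondBin
    rcases (hΦ0 (-s')).eq_or_lt with h | h
    · have := hVle L hL s' hs'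
      unfold CcondBin at this
      rw [← h] at this ⊢
      linarith
    · have : (V - cbar * Φ s') / Φ (-s') ≤ sInf A := by
        refine le_csInf hA fun x hx => ?_
        rw [div_le_iff₀ h]
        have := hVle x hx s' hs'
        unfold CcondBin at this
        linarith
      rw [div_le_iff₀ h] at this
      linarith
  rcases lt_or_ge 0 s with h | h
  · have hD : DcondBin cbar L s = L := by simp [DcondBin, h, not_le.2 h]
    rcases le_or_gt (sInf A) cbar with h' | h'
    · refine le_max_of_le_left ?_
      rw [hD, min_eq_left h']
      have h1 := hV0 s hs
      have h2 := hΦ1 (-s)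
      rw [if_pos (by linarith)] at h2
      unfold CcondBin at h1 ⊢
      nlinarith
    · refine le_max_of_le_right ?_
      have := bin_aux lbar cbarmax cbar hcbar S hSpos hSnonpos Φ α β hα hβ hcons L hLb
        (by linarith) s hs V _ (hVle L hL) le_rfl
      rw [min_eq_right (by linarith)] at this
      rwa [min_eq_right h'.le]
  · have hD : ∀ l, DcondBin cbar l s = cbar := fun l => by simp [DcondBin, h, not_lt.2 h]
    rcases le_or_gt cbar (sInf A) with h' | h'
    · refine le_max_of_le_left ?_
      rw [hD, min_eq_right h']
      linarith [hVle L hL s hs]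
    · refine le_max_of_le_right ?_
      have := bin_aux lbar cbarmax cbar hcbar S hSpos hSnonpos Φ α β hα hβ hcons (sInf A)
        ⟨hc00, hc0L.trans hLb.2⟩ (by linarith) s hs V (CcondBin cbar Φ L s - V) hV0
        (by
          have := mul_le_mul_of_nonneg_right hc0L (hΦ0 (-s))
          unfold CcondBin
          linarith)
      rw [hD] at this ⊢
      exact this
end

section
/- (Theorem 5.3, conditional form: single-expert two-stage bound.) Assume the pointwise Γ-consistency hypothesis holds with Γ(t) = β·t^α for some α ∈ (0,1] and β > 0. Then for every L ∈ A and every s ∈ S, D(L,s) − D* ≤ (L − c̄_0) + (l̄ + c̄_max)^{1−α}·β·(C_Φ(L,s) − inf_{s'∈S} C_Φ(L,s'))^α. -/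
/-- Theorem 5.3, conditional form: single-expert two-stage bound. -/
theorem single_expert_two_stage_conditional_bound
    (lbar cbarmax : ℝ) (hlbar : 0 < lbar) (hcbarmax : 0 < cbarmax)
    (A : Set ℝ) (hA : A.Nonempty) (hAsub : A ⊆ Set.Icc 0 lbar)
    (cbar : ℝ) (hcbar : cbar ∈ Set.Icc 0 cbarmax)
    (S : Set ℝ) (hSpos : ∃ s ∈ S, 0 < s) (hSnonpos : ∃ s ∈ S, s ≤ 0)
    (Φ : ℝ → ℝ) (hΦ0 : ∀ u, 0 ≤ Φ u)
    (hΦ1 : ∀ u : ℝ, (if u ≤ 0 then (1 : ℝ) else 0) ≤ Φ u)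
    (α β : ℝ) (hα : α ∈ Set.Ioc (0 : ℝ) 1) (hβ : 0 < β)
    (hcons : ∀ p ∈ Set.Icc (0 : ℝ) 1, ∀ s ∈ S,
      (p * (if s ≤ 0 then (1 : ℝ) else 0) + (1 - p) * (if 0 < s then (1 : ℝ) else 0))
          - sInf {v | ∃ s' ∈ S,
              v = p * (if s' ≤ 0 then (1 : ℝ) else 0)
                + (1 - p) * (if 0 < s' then (1 : ℝ) else 0)}
        ≤ β * ((p * Φ s + (1 - p) * Φ (-s))
            - sInf {v | ∃ s' ∈ S, v = p * Φ s' + (1 - p) * Φ (-s')}) ^ α)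
    (L : ℝ) (hL : L ∈ A) (s : ℝ) (hs : s ∈ S) :
    DcondBin cbar L s - min (sInf A) cbar ≤
      (L - sInf A)
        + (lbar + cbarmax) ^ (1 - α) * β
          * (CcondBin cbar Φ L s - sInf {v | ∃ s' ∈ S, v = CcondBin cbar Φ L s'}) ^ α := by
  obtain ⟨hα0, hα1⟩ := hα
  obtain ⟨hc0, hc1⟩ := hcbar
  obtain ⟨hL0, hL1⟩ := hAsub hL
  have hbA : BddBelow A := ⟨0, fun a ha => (hAsub ha).1⟩
  have hAL : sInf A ≤ L := csInf_le hbA hL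
  have hA0 : 0 ≤ sInf A := le_csInf hA fun a ha => (hAsub ha).1
  have hmin : min L cbar - min (sInf A) cbar ≤ L - sInf A := by
    rcases le_total L cbar with h | h <;> rcases le_total (sInf A) cbar with h' | h' <;>
      simp only [min_eq_left, min_eq_right, h, h'] <;> linarith
  suffices hmain : DcondBin cbar L s - min L cbar ≤ (lbar + cbarmax) ^ (1 - α) * β
          * (CcondBin cbar Φ L s - sInf {v | ∃ s' ∈ S, v = CcondBin cbar Φ L s'}) ^ α by
    linarith
  set T := L + cbar with hT
  have hT0 : 0 ≤ T := by positivity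
  rcases hT0.eq_or_lt with h0 | hTpos
  · have h1 : L = 0 := by linarith
    have h2 : cbar = 0 := by linarith
    subst h1 h2
    have hset : {v : ℝ | ∃ s' ∈ S, v = CcondBin 0 Φ 0 s'} = {0} := by
      ext v
      simp only [CcondBin, zero_mul, add_zero, Set.mem_setOf_eq, Set.mem_singleton_iff]
      exact ⟨fun ⟨_, _, h⟩ => h, fun h => ⟨s, hs, h⟩⟩
    rw [hset]
    simp [DcondBin, CcondBin, Real.zero_rpow hα0.ne']
  set p := cbar / T with hp
  have hTp : T * p = cbar := by rw [hp]; field_simp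
  have hTq : T * (1 - p) = L := by rw [mul_sub, hTp]; linarith
  have hp0 : 0 ≤ p := by positivity
  have hp1 : 0 ≤ 1 - p := by
    by_contra h
    push Not at h
    nlinarith
  have key := hcons p ⟨hp0, by linarith⟩ s hs
  set I := sInf {v | ∃ s' ∈ S, v = p * (if s' ≤ 0 then (1 : ℝ) else 0)
                + (1 - p) * (if 0 < s' then (1 : ℝ) else 0)} with hI
  set V := {v | ∃ s' ∈ S, v = p * Φ s' + (1 - p) * Φ (-s')} with hV
  have hbI : BddBelow {v | ∃ s' ∈ S, v = p * (if s' ≤ 0 then (1 : ℝ) else 0)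
                + (1 - p) * (if 0 < s' then (1 : ℝ) else 0)} := by
    refine ⟨0, ?_⟩
    rintro v ⟨s', _, rfl⟩
    positivity
  have hIp : I ≤ p := by
    obtain ⟨a, ha, hs0⟩ := hSnonpos
    exact csInf_le hbI ⟨a, ha, by simp [hs0, not_lt.mpr hs0]⟩
  have hIq : I ≤ 1 - p := by
    obtain ⟨a, ha, hs0⟩ := hSpos
    exact csInf_le hbI ⟨a, ha, by simp [hs0, not_le.mpr hs0]⟩
  have hTI : T * I ≤ min L cbar := by
    refine le_min ?_ ?_
    · rw [← hTq]; gcongr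
    · rw [← hTp]; gcongr
  have hbV : BddBelow V := by
    refine ⟨0, ?_⟩
    rintro v ⟨s', _, rfl⟩
    have := hΦ0 s'
    have := hΦ0 (-s')
    positivity
  have hC : ∀ u, CcondBin cbar Φ L u = T * (p * Φ u + (1 - p) * Φ (-u)) := by
    intro u
    rw [CcondBin]
    linear_combination (-Φ (-u)) * hTq - Φ u * hTp
  have hD : DcondBin cbar L s = T * (p * (if s ≤ 0 then (1 : ℝ) else 0)
      + (1 - p) * (if 0 < s then (1 : ℝ) else 0)) := by
    rw [DcondBin]
    rcases le_or_gt s 0 with h | h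
    · simp [h, not_lt.mpr h, hTp]
    · simp [h, not_le.mpr h, hTq]
  have hinf : sInf {v | ∃ s' ∈ S, v = CcondBin cbar Φ L s'} = T * sInf V := by
    rw [← smul_eq_mul, ← Real.sInf_smul_of_nonneg hT0]
    congr 1
    ext v
    simp only [Set.mem_smul_set, hV, Set.mem_setOf_eq, hC, smul_eq_mul]
    constructor
    · rintro ⟨a, ha, rfl⟩
      exact ⟨_, ⟨a, ha, rfl⟩, rfl⟩
    · rintro ⟨_, ⟨a, ha, rfl⟩, rfl⟩
      exact ⟨a, ha, rfl⟩
  rw [hinf, hC, hD, ← mul_sub]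
  set Y := p * Φ s + (1 - p) * Φ (-s) - sInf V with hY
  have hY0 : 0 ≤ Y := sub_nonneg.mpr (csInf_le hbV ⟨s, hs, rfl⟩)
  have hTT : T ^ (1 - α) * T ^ α = T := by
    rw [← Real.rpow_add hTpos]; simp
  have hmono : T ^ (1 - α) ≤ (lbar + cbarmax) ^ (1 - α) :=
    Real.rpow_le_rpow hT0 (by linarith) (by linarith)
  have hkey2 := mul_le_mul_of_nonneg_left key hT0
  rw [mul_sub] at hkey2
  have hXa : 0 ≤ β * (T * Y) ^ α := by positivity
  have hfin := mul_le_mul_of_nonneg_right hmono hXa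
  have heq : T ^ (1 - α) * (β * (T * Y) ^ α) = T * (β * Y ^ α) := by
    rw [Real.mul_rpow hT0 hY0]
    linear_combination (β * Y ^ α) * hTT
  rw [heq] at hfin
  rw [mul_assoc ((lbar + cbarmax) ^ (1 - α))]
  linarith
end
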